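/- arXiv:2306.16739 — 2 statements merged into one kernel-verified Lean document; each statement's English description precedes it below -/
import Mathlib

section
/- Let K ≥ 1 be a natural number and ρ ∈ (0,1) a real number with (1 − ρ)(K + 1) > 2. Define f(r) = (1 − ρ)·( r/(r − 1) − K/(r^K − 1) ) for r > 1. Then f is continuous on (1, ∞), f(r) → (1 − ρ)(K + 1)/2 as r → 1⁺, f(r) → 1 − ρ as r → ∞, and consequently there exists r > 1 with f(r) = 1. -/
open Filter Set Topology

/-- Existence of the common ratio `r > 1` solving the coverage equation
`C_RAA = (1-ρ)(r/(r-1) - K/(r^K - 1)) = 1`: the coverage function is continuous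
on `(1, ∞)`, tends to `(1-ρ)(K+1)/2` as `r → 1⁺` and to `1-ρ` as `r → ∞`, hence
takes the value `1` for some `r > 1` whenever `(1-ρ)(K+1) > 2`. -/
theorem raa_ratio_exists
    (K : ℕ) (hK : 1 ≤ K) (ρ : ℝ) (hρ0 : 0 < ρ) (hρ1 : ρ < 1)
    (hcond : (1 - ρ) * ((K : ℝ) + 1) > 2)
    (f : ℝ → ℝ)
    (hf : ∀ r : ℝ, f r = (1 - ρ) * (r / (r - 1) - (K : ℝ) / (r ^ K - 1))) :
    ContinuousOn f (Set.Ioi (1 : ℝ)) ∧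
    Tendsto f (nhdsWithin 1 (Set.Ioi (1 : ℝ))) (nhds ((1 - ρ) * ((K : ℝ) + 1) / 2)) ∧
    Tendsto f atTop (nhds (1 - ρ)) ∧
    ∃ r : ℝ, 1 < r ∧ f r = 1 := by
  have hne : ∀ r : ℝ, 1 < r → r ^ K - 1 ≠ 0 := fun r hr =>
    (sub_pos.2 (one_lt_pow₀ hr (by omega))).ne'
  have hfe : f = fun r : ℝ => (1 - ρ) * (r / (r - 1) - (K : ℝ) / (r ^ K - 1)) := funext hf
  have hcont : ContinuousOn f (Set.Ioi (1 : ℝ)) := by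
    rw [hfe]
    refine continuousOn_const.mul (ContinuousOn.sub ?_ ?_)
    · exact ContinuousOn.div (by fun_prop) (by fun_prop) fun r hr => (sub_pos.2 hr).ne'
    · exact ContinuousOn.div (by fun_prop) (by fun_prop) fun r hr => hne r hr
  have hlim1 : Tendsto f (nhdsWithin 1 (Set.Ioi (1 : ℝ)))
      (nhds ((1 - ρ) * ((K : ℝ) + 1) / 2)) := by
    let S : ℕ → ℝ → ℝ := fun n r => ∑ i ∈ Finset.range n, r ^ i
    let T : ℝ → ℝ := fun r => ∑ i ∈ Finset.range K, S i r
    have hS : ∀ n r, S n r * (r - 1) = r ^ n - 1 := fun n r => geom_sum_mul r n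
    have hT : ∀ r, T r * (r - 1) = S K r - K := by
      intro r
      simp only [T, Finset.sum_mul, hS, Finset.sum_sub_distrib]
      simp [S]
    have hSc : ∀ n, Continuous (S n) := fun n => by
      simp only [S]; fun_prop
    have hTc : Continuous T := continuous_finsetSum _ fun i _ => hSc i
    have hS1 : ∀ n, S n 1 = n := fun n => by simp [S]
    have hT1 : T 1 = (K : ℝ) * (K - 1) / 2 := by
      simp only [T, hS1]
      clear * -
      induction K with
      | zero => simp
      | succ k ih => rw [Finset.sum_range_succ, ih]; push_cast; ring
    have hK0 : (K : ℝ) ≠ 0 := by positivity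
    have h1 : Tendsto (fun r => (1 - ρ) * (1 + T r / S K r)) (nhdsWithin 1 (Set.Ioi (1 : ℝ)))
        (nhds ((1 - ρ) * (1 + T 1 / S K 1))) := by
      apply Tendsto.mono_left _ nhdsWithin_le_nhds
      refine Tendsto.const_mul _ (Tendsto.const_add _ ?_)
      exact (hTc.tendsto 1).div ((hSc K).tendsto 1) (by rw [hS1]; exact hK0)
    have h2 : (1 - ρ) * (1 + T 1 / S K 1) = (1 - ρ) * ((K : ℝ) + 1) / 2 := by
      rw [hT1, hS1]; field_simp; ring
    rw [h2] at h1
    refine h1.congr' ?_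
    filter_upwards [self_mem_nhdsWithin] with r hr
    have hr0 : r - 1 ≠ 0 := (sub_pos.2 hr).ne'
    have hk := hne r hr
    have hSK := hS K r
    have hS0 : S K r ≠ 0 := by
      intro h; rw [h, zero_mul] at hSK; exact hk hSK.symm
    rw [hf, ← hSK]
    congr 1
    field_simp
    linear_combination hT r
  have hlim2 : Tendsto f atTop (nhds (1 - ρ)) := by
    have ha : Tendsto (fun r : ℝ => r - 1) atTop atTop := tendsto_atTop_add_const_right _ (-1) tendsto_id
    have hb : Tendsto (fun r : ℝ => r ^ K - 1) atTop atTop :=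
      tendsto_atTop_add_const_right _ (-1) (tendsto_pow_atTop (by omega))
    have h1 : Tendsto (fun r : ℝ => (1 - ρ) * ((1 + 1 / (r - 1)) - (K : ℝ) / (r ^ K - 1))) atTop
        (nhds ((1 - ρ) * ((1 + 0) - 0))) :=
      (((ha.const_div_atTop 1).const_add 1).sub (hb.const_div_atTop (K : ℝ))).const_mul (1 - ρ)
    have h2 : (1 - ρ) * ((1 + 0) - 0) = 1 - ρ := by ring
    rw [h2] at h1
    refine h1.congr' ?_
    filter_upwards [eventually_gt_atTop 1] with r hr
    have hr0 : r - 1 ≠ 0 := (sub_pos.2 hr).ne'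
    rw [hf]
    congr 2
    field_simp
    ring
  refine ⟨hcont, hlim1, hlim2, ?_⟩
  obtain ⟨a, ha, ha1⟩ := ((hlim1.eventually (lt_mem_nhds
    (show 1 < (1 - ρ) * ((K : ℝ) + 1) / 2 by linarith))).and self_mem_nhdsWithin).exists
  obtain ⟨b, hb, hb1⟩ := ((hlim2.eventually (gt_mem_nhds
    (show 1 - ρ < 1 by linarith))).and (eventually_gt_atTop 1)).exists
  obtain ⟨r, hr, hr1⟩ := isPreconnected_Ioi.intermediate_value (s := Set.Ioi (1 : ℝ))
    (mem_Ioi.2 hb1) ha1 hcont ⟨hb.le, ha.le⟩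
  exact ⟨r, hr, hr1⟩
end

section
/- Let F > 0, let θ ∈ [0, π/2) and y ∈ ℝ, and define g(y) = √(F² + (F·tan θ − y)²). Then 0 ≤ g(y) − ( F/cos θ − y·sin θ ) ≤ y²/(2F). -/
/-- First-order approximation of the distance to the `n`-th focal point (Eq. (A.1)):
the tangent-line expansion `F/cos θ − y·sin θ` underestimates
`g(y) = √(F² + (F·tan θ − y)²)` by at most `y²/(2F)`. -/
theorem focal_distance_taylor_bounds
    (F : ℝ) (hF : 0 < F) (θ : ℝ) (hθ : θ ∈ Set.Ico 0 (Real.pi / 2)) (y : ℝ) :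
    0 ≤ Real.sqrt (F ^ 2 + (F * Real.tan θ - y) ^ 2)
          - (F / Real.cos θ - y * Real.sin θ) ∧
    Real.sqrt (F ^ 2 + (F * Real.tan θ - y) ^ 2)
          - (F / Real.cos θ - y * Real.sin θ) ≤ y ^ 2 / (2 * F) := by
  have hc : 0 < Real.cos θ :=
    Real.cos_pos_of_mem_Ioo ⟨by linarith [hθ.1, Real.pi_pos], hθ.2⟩
  have hc1 : Real.cos θ ≤ 1 := Real.cos_le_one θ
  have hsc := Real.sin_sq_add_cos_sq θ
  rw [Real.tan_eq_sin_div_cos]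
  generalize Real.cos θ = c at *
  generalize Real.sin θ = s at *
  have hAF : F ≤ F / c := by
    rw [le_div_iff₀ hc]; nlinarith
  have hins : F ^ 2 + (F * (s / c) - y) ^ 2 = (F / c - y * s) ^ 2 + y ^ 2 * c ^ 2 := by
    have h1 : F * (s / c) = F / c * s := by ring
    have h2 : F = F / c * c := by field_simp
    rw [h1]
    generalize F / c = A at *
    rw [h2]
    linear_combination (A ^ 2 - y ^ 2) * hsc
  have hq : 0 ≤ y ^ 2 / (2 * F) := by positivity
  have hkey : 2 * F * c ^ 2 ≤ 2 * (F / c - y * s) + y ^ 2 / (2 * F) := by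
    have h3 : 0 ≤ (y - 2 * F * s) ^ 2 / (2 * F) := by positivity
    have h4 : (y - 2 * F * s) ^ 2 / (2 * F) = y ^ 2 / (2 * F) - 2 * y * s + 2 * F * s ^ 2 := by
      field_simp
      ring
    have h5 : 2 * F * s ^ 2 + 2 * F * c ^ 2 = 2 * F := by
      linear_combination 2 * F * hsc
    linarith
  have hqF : y ^ 2 / (2 * F) * (2 * F) = y ^ 2 := by field_simp
  rw [hins]
  generalize F / c = A at *
  generalize y ^ 2 / (2 * F) = q at *
  constructor
  · rw [sub_nonneg]
    apply Real.le_sqrt_of_sq_le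
    nlinarith [sq_nonneg (y * c)]
  · rw [sub_le_iff_le_add]
    apply Real.sqrt_le_iff.mpr
    have h6 : 0 ≤ 2 * F * c ^ 2 := by positivity
    refine ⟨by linarith, ?_⟩
    have h7 := mul_le_mul_of_nonneg_left hkey hq
    have h8 : q * (2 * F * c ^ 2) = y ^ 2 * c ^ 2 := by rw [← hqF]; ring
    nlinarith
end
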